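/- Let n ≥ 1 be an integer, Ω ⊂ ℝⁿ a bounded open set, T > 0, x₀ ∈ ℝⁿ \ cl(Ω), and β ∈ (0,1) with sup_{x∈Ω}|x−x₀| < βT. Let C₀ > 0 be such that ψ ≥ 1 on Ω × (−T,T), where ψ(x,t) = |x−x₀|² − βt² + C₀. Then there exist λ > 0, s₀ > 0 and M > 0 such that, with φ = e^{λψ}, for every s ≥ s₀ and every smooth function z : ℝⁿ × ℝ → ℝ vanishing for x outside a compact subset of Ω: s ∫_Ω e^{2sφ(x,−T)} (|∂ₜz(x,−T)|² + |∇z(x,−T)|²) dx + s³ ∫_Ω e^{2sφ(x,−T)} |z(x,−T)|² dx ≤ M ∫_{−T}^{T} ∫_Ω e^{2sφ} |∂ₜ²z − Δz|² dx dt. -/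

import Mathlib

open MeasureTheory Real Set
open scoped RealInnerProductSpace

/-- The Laplacian of a real-valued function on Euclidean space. -/
noncomputable def lap {n : ℕ} (f : EuclideanSpace ℝ (Fin n) → ℝ) (x : EuclideanSpace ℝ (Fin n)) : ℝ :=
  ∑ i : Fin n, fderiv ℝ (fun y => fderiv ℝ f y (EuclideanSpace.single i 1)) x (EuclideanSpace.single i 1)

/-- The weight `ψ(x,t) = |x - x₀|² - β t² + C₀`. -/
noncomputable def psi {n : ℕ} (x₀ : EuclideanSpace ℝ (Fin n)) (β C₀ : ℝ)
    (x : EuclideanSpace ℝ (Fin n)) (t : ℝ) : ℝ :=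
  ‖x - x₀‖ ^ 2 - β * t ^ 2 + C₀

/-- The Carleman weight `φ = e^{λψ}`. -/
noncomputable def phi {n : ℕ} (x₀ : EuclideanSpace ℝ (Fin n)) (β C₀ l : ℝ)
    (x : EuclideanSpace ℝ (Fin n)) (t : ℝ) : ℝ :=
  Real.exp (l * psi x₀ β C₀ x t)

open scoped ContDiff

/-! ### Directional derivatives -/

/-- Directional derivative. -/
noncomputable def dd {V : Type*} [NormedAddCommGroup V] [NormedSpace ℝ V] (e : V) (f : V → ℝ) :
    V → ℝ := fun q => fderiv ℝ f q e

/-- `f` is differentiable with directional derivative `f'` along `e`. -/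
def HD {V : Type*} [NormedAddCommGroup V] [NormedSpace ℝ V] (e : V) (f f' : V → ℝ) : Prop :=
  Differentiable ℝ f ∧ ∀ q, fderiv ℝ f q e = f' q

section HDlemmas
variable {V : Type*} [NormedAddCommGroup V] [NormedSpace ℝ V]

lemma HD.eq {e : V} {f f' : V → ℝ} (h : HD e f f') (q : V) : dd e f q = f' q := h.2 q

lemma HD.feq {e : V} {f f' : V → ℝ} (h : HD e f f') : dd e f = f' := funext h.2

lemma HD.of_smooth (e : V) {f : V → ℝ} (h : ContDiff ℝ ∞ f) : HD e f (dd e f) :=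
  ⟨h.differentiable (by simp), fun _ => rfl⟩

lemma HD.const (e : V) (c : ℝ) : HD e (fun _ => c) (fun _ => 0) :=
  ⟨differentiable_const c, fun q => by simp⟩

lemma HD.add {e : V} {f f' g g' : V → ℝ} (hf : HD e f f') (hg : HD e g g') :
    HD e (fun q => f q + g q) (fun q => f' q + g' q) :=
  ⟨hf.1.add hg.1, fun q => by
    rw [fderiv_fun_add (hf.1 q) (hg.1 q)]; simp [hf.2 q, hg.2 q]⟩

lemma HD.sub {e : V} {f f' g g' : V → ℝ} (hf : HD e f f') (hg : HD e g g') :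
    HD e (fun q => f q - g q) (fun q => f' q - g' q) :=
  ⟨hf.1.sub hg.1, fun q => by
    rw [fderiv_fun_sub (hf.1 q) (hg.1 q)]; simp [hf.2 q, hg.2 q]⟩

lemma HD.mul {e : V} {f f' g g' : V → ℝ} (hf : HD e f f') (hg : HD e g g') :
    HD e (fun q => f q * g q) (fun q => f' q * g q + f q * g' q) :=
  ⟨hf.1.mul hg.1, fun q => by
    rw [fderiv_fun_mul (hf.1 q) (hg.1 q)]; simp [hf.2 q, hg.2 q]; ring⟩

lemma HD.cmul {e : V} {f f' : V → ℝ} (c : ℝ) (hf : HD e f f') :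
    HD e (fun q => c * f q) (fun q => c * f' q) :=
  ⟨hf.1.const_mul c, fun q => by
    rw [fderiv_const_mul (hf.1 q)]; simp [hf.2 q]⟩

lemma HD.exp {e : V} {f f' : V → ℝ} (hf : HD e f f') :
    HD e (fun q => Real.exp (f q)) (fun q => Real.exp (f q) * f' q) :=
  ⟨hf.1.exp, fun q => by
    rw [fderiv_exp (hf.1 q)]; simp [hf.2 q]⟩

lemma HD.sum {ι : Type*} [Fintype ι] {e : V} {f f' : ι → V → ℝ} (hf : ∀ i, HD e (f i) (f' i)) :
    HD e (fun q => ∑ i, f i q) (fun q => ∑ i, f' i q) :=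
  ⟨Differentiable.fun_sum fun i _ => (hf i).1, fun q => by
    rw [fderiv_fun_sum fun i _ => (hf i).1 q]; simp [fun i => (hf i).2 q]⟩

lemma dd_smooth (e : V) {f : V → ℝ} (h : ContDiff ℝ ∞ f) : ContDiff ℝ ∞ (dd e f) :=
  (h.fderiv_right (m := ∞) (by simp)).clm_apply contDiff_const

lemma dd_comm (a b : V) {f : V → ℝ} (h : ContDiff ℝ ∞ f) (q : V) :
    dd a (dd b f) q = dd b (dd a f) q := by
  have h1 : ∀ c d : V, dd c (dd d f) q = fderiv ℝ (fderiv ℝ f) q c d := by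
    intro c d
    have hd : DifferentiableAt ℝ (fderiv ℝ f) q :=
      (h.fderiv_right (m := ∞) (by simp)).differentiable (by simp) q
    unfold dd
    rw [fderiv_clm_apply hd (differentiableAt_const d)]
    simp
  rw [h1, h1]
  have := (h.contDiffAt (x := q)).isSymmSndFDerivAt (by simp; exact WithTop.coe_le_coe.2 le_top)
  exact this a b

/-- The general divergence identity. -/
lemma div_identity {ι : Type*} [Fintype ι] (e : ι → V) (η : ι → ℝ) (s : ℝ)
    {v φ A θ : V → ℝ} (hv : ContDiff ℝ ∞ v) (hφ : ContDiff ℝ ∞ φ) (hA : ContDiff ℝ ∞ A)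
    (hθ : ContDiff ℝ ∞ θ) (q : V) :
    ∑ a, dd (e a) (fun p => η a * (-2 * (dd (e a) v p * ∑ b, η b * (dd (e b) φ p * dd (e b) v p))
      + dd (e a) φ p * (∑ b, η b * (dd (e b) v p * dd (e b) v p))
      - s ^ 2 * (A p * (dd (e a) φ p * (v p * v p)))
      + θ p * (dd (e a) v p * v p)
      - (1 / 2) * (dd (e a) θ p * (v p * v p)))) q
    = ((∑ a, η a * dd (e a) (dd (e a) v) q) + s ^ 2 * A q * v q)
        * (-2 * (∑ b, η b * (dd (e b) φ q * dd (e b) v q)) + θ q * v q)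
      - 2 * (∑ a, ∑ b, η a * η b * (dd (e a) (dd (e b) φ) q * (dd (e a) v q * dd (e b) v q)))
      + ((∑ a, η a * dd (e a) (dd (e a) φ) q) + θ q) * (∑ b, η b * (dd (e b) v q * dd (e b) v q))
      - s ^ 2 * ((∑ a, η a * (dd (e a) φ q * dd (e a) A q))
          + A q * ((∑ a, η a * dd (e a) (dd (e a) φ) q) + θ q)) * (v q * v q)
      - (1 / 2) * (∑ a, η a * dd (e a) (dd (e a) θ) q) * (v q * v q) := by
  have S := fun a {f : V → ℝ} (h : ContDiff ℝ ∞ f) => HD.of_smooth (e a) h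
  have S2 := fun a b {f : V → ℝ} (h : ContDiff ℝ ∞ f) => HD.of_smooth (e a) (dd_smooth (e b) h)
  have key : ∀ a, dd (e a) (fun p => η a * (-2 * (dd (e a) v p * ∑ b, η b * (dd (e b) φ p * dd (e b) v p))
      + dd (e a) φ p * (∑ b, η b * (dd (e b) v p * dd (e b) v p))
      - s ^ 2 * (A p * (dd (e a) φ p * (v p * v p)))
      + θ p * (dd (e a) v p * v p)
      - (1 / 2) * (dd (e a) θ p * (v p * v p)))) q = _ := fun a =>
    HD.eq (HD.cmul (η a) ((((HD.cmul (-2) ((S2 a a hv).mul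
      (HD.sum fun b => HD.cmul (η b) ((S2 a b hφ).mul (S2 a b hv))))).add
      ((S2 a a hφ).mul (HD.sum fun b => HD.cmul (η b) ((S2 a b hv).mul (S2 a b hv))))).sub
      (HD.cmul (s ^ 2) ((S a hA).mul ((S2 a a hφ).mul ((S a hv).mul (S a hv)))))).add
      ((S a hθ).mul ((S2 a a hv).mul (S a hv))) |>.sub
      (HD.cmul (1 / 2) ((S2 a a hθ).mul ((S a hv).mul (S a hv)))))) q
  rw [Finset.sum_congr rfl fun a _ => key a]
  clear key S S2
  have cancel : ∑ a, ∑ b, η a * η b * (dd (e a) v q * (dd (e b) φ q * dd (e a) (dd (e b) v) q))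
      = ∑ a, ∑ b, η a * η b * (dd (e a) φ q * (dd (e b) v q * dd (e a) (dd (e b) v) q)) := by
    rw [Finset.sum_comm]
    refine Finset.sum_congr rfl fun a _ => Finset.sum_congr rfl fun b _ => ?_
    rw [dd_comm (e a) (e b) hv q]; ring
  set X := ∑ b, η b * (dd (e b) φ q * dd (e b) v q) with hX
  set Q := ∑ b, η b * (dd (e b) v q * dd (e b) v q) with hQ
  have e1 : ∀ a, ∑ b, η b * (dd (e a) (dd (e b) φ) q * dd (e b) v q
      + dd (e b) φ q * dd (e a) (dd (e b) v) q)
      = (∑ b, η b * (dd (e a) (dd (e b) φ) q * dd (e b) v q))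
        + ∑ b, η b * (dd (e b) φ q * dd (e a) (dd (e b) v) q) := by
    intro a; rw [← Finset.sum_add_distrib]; exact Finset.sum_congr rfl fun b _ => by ring
  have e2 : ∀ a, ∑ b, η b * (dd (e a) (dd (e b) v) q * dd (e b) v q
      + dd (e b) v q * dd (e a) (dd (e b) v) q)
      = 2 * ∑ b, η b * (dd (e b) v q * dd (e a) (dd (e b) v) q) := by
    intro a; rw [Finset.mul_sum]; exact Finset.sum_congr rfl fun b _ => by ring
  have c1 : ∑ a, ∑ b, η a * η b * (dd (e a) (dd (e b) φ) q * (dd (e a) v q * dd (e b) v q))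
      = ∑ a, η a * (dd (e a) v q * ∑ b, η b * (dd (e a) (dd (e b) φ) q * dd (e b) v q)) := by
    refine Finset.sum_congr rfl fun a _ => ?_
    rw [Finset.mul_sum, Finset.mul_sum]; exact Finset.sum_congr rfl fun b _ => by ring
  have c2 : ∑ a, ∑ b, η a * η b * (dd (e a) v q * (dd (e b) φ q * dd (e a) (dd (e b) v) q))
      = ∑ a, η a * (dd (e a) v q * ∑ b, η b * (dd (e b) φ q * dd (e a) (dd (e b) v) q)) := by
    refine Finset.sum_congr rfl fun a _ => ?_
    rw [Finset.mul_sum, Finset.mul_sum]; exact Finset.sum_congr rfl fun b _ => by ring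
  have c3 : ∑ a, ∑ b, η a * η b * (dd (e a) φ q * (dd (e b) v q * dd (e a) (dd (e b) v) q))
      = ∑ a, η a * (dd (e a) φ q * ∑ b, η b * (dd (e b) v q * dd (e a) (dd (e b) v) q)) := by
    refine Finset.sum_congr rfl fun a _ => ?_
    rw [Finset.mul_sum, Finset.mul_sum]; exact Finset.sum_congr rfl fun b _ => by ring
  rw [c2, c3] at cancel
  simp only [e1, e2]
  rw [c1]
  calc _ = ∑ a, ((-2 * X + θ q * v q) * (η a * dd (e a) (dd (e a) v) q)
        + (-2) * (η a * (dd (e a) v q * ∑ b, η b * (dd (e a) (dd (e b) φ) q * dd (e b) v q)))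
        + (-2) * (η a * (dd (e a) v q * ∑ b, η b * (dd (e b) φ q * dd (e a) (dd (e b) v) q)))
        + 2 * (η a * (dd (e a) φ q * ∑ b, η b * (dd (e b) v q * dd (e a) (dd (e b) v) q)))
        + (Q - s ^ 2 * A q * (v q * v q)) * (η a * dd (e a) (dd (e a) φ) q)
        + (- s ^ 2 * (v q * v q)) * (η a * (dd (e a) φ q * dd (e a) A q))
        + (-2 * s ^ 2 * A q * v q) * (η a * (dd (e a) φ q * dd (e a) v q))
        + θ q * (η a * (dd (e a) v q * dd (e a) v q))
        + (- (1 / 2) * (v q * v q)) * (η a * dd (e a) (dd (e a) θ) q)) := by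
          exact Finset.sum_congr rfl fun a _ => by ring
    _ = _ := by
      simp only [Finset.sum_add_distrib, ← Finset.mul_sum]
      rw [cancel, ← hX, ← hQ]
      ring

/-- Conjugation by the weight. -/
lemma conj_first (e : V) (s : ℝ) {v φ Z : V → ℝ} (hv : ContDiff ℝ ∞ v) (hφ : ContDiff ℝ ∞ φ)
    (hZ : ∀ q, Z q = Real.exp (-s * φ q) * v q) (q : V) :
    dd e Z q = Real.exp (-s * φ q) * (dd e v q - s * dd e φ q * v q) := by
  obtain rfl : Z = fun q => Real.exp (-s * φ q) * v q := funext hZ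
  have := HD.eq ((HD.exp (HD.cmul (-s) (HD.of_smooth e hφ))).mul (HD.of_smooth e hv)) q
  rw [this]; ring

lemma conj_second (e : V) (s : ℝ) {v φ Z : V → ℝ} (hv : ContDiff ℝ ∞ v) (hφ : ContDiff ℝ ∞ φ)
    (hZ : ∀ q, Z q = Real.exp (-s * φ q) * v q) (q : V) :
    dd e (dd e Z) q = Real.exp (-s * φ q) * (dd e (dd e v) q - 2 * s * (dd e φ q * dd e v q)
      - s * v q * dd e (dd e φ) q + s ^ 2 * v q * (dd e φ q * dd e φ q)) := by
  have h1 := HD.of_smooth e (dd_smooth e hv)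
  have h2 := HD.of_smooth e (dd_smooth e hφ)
  have hd : ContDiff ℝ ∞ (fun p => dd e v p - s * (dd e φ p * v p)) :=
    (dd_smooth e hv).sub (contDiff_const.mul ((dd_smooth e hφ).mul hv))
  rw [conj_first e s hd hφ (Z := dd e Z) (fun p => by rw [conj_first e s hv hφ hZ p]; ring) q]
  rw [(h1.sub (HD.cmul s (h2.mul (HD.of_smooth e hv)))).eq q]
  ring

lemma conj_box {ι : Type*} [Fintype ι] (e : ι → V) (η : ι → ℝ) (s : ℝ)
    {v φ Z : V → ℝ} (hv : ContDiff ℝ ∞ v) (hφ : ContDiff ℝ ∞ φ)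
    (hZ : ∀ q, Z q = Real.exp (-s * φ q) * v q) (q : V) :
    ∑ a, η a * dd (e a) (dd (e a) Z) q = Real.exp (-s * φ q) *
      ((∑ a, η a * dd (e a) (dd (e a) v) q) - 2 * s * (∑ a, η a * (dd (e a) φ q * dd (e a) v q))
      - s * v q * (∑ a, η a * dd (e a) (dd (e a) φ) q)
      + s ^ 2 * v q * (∑ a, η a * (dd (e a) φ q * dd (e a) φ q))) := by
  simp only [Finset.mul_sum, ← Finset.sum_add_distrib, ← Finset.sum_sub_distrib]
  refine Finset.sum_congr rfl fun a _ => ?_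
  rw [conj_second (e a) s hv hφ hZ q]; ring

end HDlemmas

/-! ### The concrete setting -/

section Concrete
variable {n : ℕ}

/-- Basis vectors of space-time; `none` is the time direction. -/
noncomputable def ee (n : ℕ) : Option (Fin n) → EuclideanSpace ℝ (Fin n) × ℝ
  | none => (0, 1)
  | some i => (EuclideanSpace.single i 1, 0)

/-- Minkowski signature. -/
def eta (n : ℕ) : Option (Fin n) → ℝ
  | none => 1
  | some _ => -1

/-- Coefficients of the quadratic weight. -/
def kap (n : ℕ) (β : ℝ) : Option (Fin n) → ℝ
  | none => -β
  | some _ => 1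

/-- Centered coordinates. -/
def yy (x₀ : EuclideanSpace ℝ (Fin n)) : Option (Fin n) → EuclideanSpace ℝ (Fin n) × ℝ → ℝ
  | none => fun q => q.2
  | some i => fun q => q.1 i - x₀ i

lemma eta_sq (a : Option (Fin n)) : eta n a * eta n a = 1 := by
  cases a <;> simp [eta]

lemma HD_yy (x₀ : EuclideanSpace ℝ (Fin n)) (a b : Option (Fin n)) :
    HD (ee n a) (yy x₀ b) (fun _ => if a = b then 1 else 0) := by
  cases b with
  | none =>
    have h : ∀ q, HasFDerivAt (yy x₀ none) (ContinuousLinearMap.snd ℝ (EuclideanSpace ℝ (Fin n)) ℝ) q :=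
      fun q => hasFDerivAt_snd
    refine ⟨fun q => (h q).differentiableAt, fun q => ?_⟩
    rw [(h q).fderiv]
    cases a <;> simp [ee]
  | some j =>
    have h : ∀ q, HasFDerivAt (yy x₀ (some j)) ((EuclideanSpace.proj j : EuclideanSpace ℝ (Fin n) →L[ℝ] ℝ).comp
        (ContinuousLinearMap.fst ℝ (EuclideanSpace ℝ (Fin n)) ℝ)) q := by
      intro q
      exact (((EuclideanSpace.proj j : EuclideanSpace ℝ (Fin n) →L[ℝ] ℝ).comp
        (ContinuousLinearMap.fst ℝ (EuclideanSpace ℝ (Fin n)) ℝ)).hasFDerivAt).sub_const (x₀ j)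
    refine ⟨fun q => (h q).differentiableAt, fun q => ?_⟩
    rw [(h q).fderiv]
    cases a <;> simp [ee, eq_comm]

lemma yy_smooth (x₀ : EuclideanSpace ℝ (Fin n)) (b : Option (Fin n)) :
    ContDiff ℝ ∞ (yy x₀ b) := by
  cases b with
  | none => exact contDiff_snd
  | some j => 
    exact (((EuclideanSpace.proj j : EuclideanSpace ℝ (Fin n) →L[ℝ] ℝ).comp
        (ContinuousLinearMap.fst ℝ (EuclideanSpace ℝ (Fin n)) ℝ)).contDiff).sub contDiff_const

/-- The weight as a function on space-time. -/
noncomputable def ph (x₀ : EuclideanSpace ℝ (Fin n)) (β C₀ l : ℝ)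
    (q : EuclideanSpace ℝ (Fin n) × ℝ) : ℝ :=
  Real.exp (l * ((∑ a, kap n β a * (yy x₀ a q * yy x₀ a q)) + C₀))

lemma sum_yy (x₀ : EuclideanSpace ℝ (Fin n)) (q : EuclideanSpace ℝ (Fin n) × ℝ) :
    ∑ i, yy x₀ (some i) q * yy x₀ (some i) q = ‖q.1 - x₀‖ ^ 2 := by
  rw [EuclideanSpace.norm_sq_eq]
  refine Finset.sum_congr rfl fun i _ => ?_
  simp [yy, sq]

lemma phi_eq (x₀ : EuclideanSpace ℝ (Fin n)) (β C₀ l : ℝ) (x : EuclideanSpace ℝ (Fin n)) (t : ℝ) :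
    phi x₀ β C₀ l x t = ph x₀ β C₀ l (x, t) := by
  have := sum_yy x₀ (x, t)
  unfold phi psi ph
  rw [Fintype.sum_option]
  simp only [kap, one_mul, this]
  congr 2
  simp only [yy]; ring

lemma ph_pos (x₀ : EuclideanSpace ℝ (Fin n)) (β C₀ l : ℝ) (q : EuclideanSpace ℝ (Fin n) × ℝ) :
    0 < ph x₀ β C₀ l q := Real.exp_pos _

lemma ph_smooth (x₀ : EuclideanSpace ℝ (Fin n)) (β C₀ l : ℝ) :
    ContDiff ℝ ∞ (ph x₀ β C₀ l) := by
  unfold ph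
  refine (contDiff_const.mul (ContDiff.add (ContDiff.sum fun a _ => ?_) contDiff_const)).exp
  exact contDiff_const.mul ((yy_smooth x₀ a).mul (yy_smooth x₀ a))

lemma HD_ph (x₀ : EuclideanSpace ℝ (Fin n)) (β C₀ l : ℝ) (a : Option (Fin n)) :
    HD (ee n a) (ph x₀ β C₀ l) (fun q => ph x₀ β C₀ l q * (2 * l * kap n β a * yy x₀ a q)) := by
  have := HD.exp (HD.cmul l ((HD.sum fun b => HD.cmul (kap n β b) ((HD_yy x₀ a b).mul (HD_yy x₀ a b))).add
    (HD.const (ee n a) C₀)))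
  refine ⟨this.1, fun q => ?_⟩
  refine (this.2 q).trans ?_
  unfold ph
  simp [mul_add, Finset.sum_add_distrib]
  ring

lemma HD_dph (x₀ : EuclideanSpace ℝ (Fin n)) (β C₀ l : ℝ) (a b : Option (Fin n)) :
    HD (ee n a) (dd (ee n b) (ph x₀ β C₀ l)) (fun q => ph x₀ β C₀ l q *
      (4 * l ^ 2 * (kap n β a * yy x₀ a q) * (kap n β b * yy x₀ b q)
        + if a = b then 2 * l * kap n β a else 0)) := by
  rw [(HD_ph x₀ β C₀ l b).feq]
  have := (HD_ph x₀ β C₀ l a).mul (HD.cmul (2 * l * kap n β b) (HD_yy x₀ a b))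
  refine ⟨this.1, fun q => ?_⟩
  refine (this.2 q).trans ?_
  by_cases h : a = b
  · subst h; simp; ring
  · simp [h]; ring

/-- The quadratic quantity `ψ_t² - |∇ψ|²`. -/
noncomputable def qD (x₀ : EuclideanSpace ℝ (Fin n)) (β : ℝ) (q : EuclideanSpace ℝ (Fin n) × ℝ) : ℝ :=
  4 * ∑ a, eta n a * kap n β a ^ 2 * (yy x₀ a q * yy x₀ a q)

lemma qD_eq (x₀ : EuclideanSpace ℝ (Fin n)) (β : ℝ) (q : EuclideanSpace ℝ (Fin n) × ℝ) :
    qD x₀ β q = 4 * (β ^ 2 * q.2 ^ 2 - ‖q.1 - x₀‖ ^ 2) := by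
  rw [← sum_yy]
  unfold qD
  rw [Fintype.sum_option]
  simp [eta, kap, yy]; ring

/-- The coefficient `A`. -/
noncomputable def aA (x₀ : EuclideanSpace ℝ (Fin n)) (β C₀ l : ℝ)
    (q : EuclideanSpace ℝ (Fin n) × ℝ) : ℝ :=
  l ^ 2 * ((ph x₀ β C₀ l q * ph x₀ β C₀ l q) * qD x₀ β q)

lemma qD_smooth (x₀ : EuclideanSpace ℝ (Fin n)) (β : ℝ) : ContDiff ℝ ∞ (qD x₀ β) := by
  unfold qD
  refine contDiff_const.mul (ContDiff.sum fun a _ => ?_)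
  exact contDiff_const.mul ((yy_smooth x₀ a).mul (yy_smooth x₀ a))

lemma aA_smooth (x₀ : EuclideanSpace ℝ (Fin n)) (β C₀ l : ℝ) :
    ContDiff ℝ ∞ (aA x₀ β C₀ l) := by
  unfold aA
  exact contDiff_const.mul (((ph_smooth x₀ β C₀ l).mul (ph_smooth x₀ β C₀ l)).mul (qD_smooth x₀ β))

lemma aA_eq (x₀ : EuclideanSpace ℝ (Fin n)) (β C₀ l : ℝ) (q : EuclideanSpace ℝ (Fin n) × ℝ) :
    ∑ a, eta n a * (dd (ee n a) (ph x₀ β C₀ l) q * dd (ee n a) (ph x₀ β C₀ l) q)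
      = aA x₀ β C₀ l q := by
  unfold aA qD
  simp only [Finset.mul_sum]
  refine Finset.sum_congr rfl fun a _ => ?_
  rw [(HD_ph x₀ β C₀ l a).eq]; ring

lemma HD_qD (x₀ : EuclideanSpace ℝ (Fin n)) (β : ℝ) (a : Option (Fin n)) :
    HD (ee n a) (qD x₀ β) (fun q => 8 * eta n a * kap n β a ^ 2 * yy x₀ a q) := by
  have := HD.cmul 4 (HD.sum fun b => HD.cmul (eta n b * kap n β b ^ 2) ((HD_yy x₀ a b).mul (HD_yy x₀ a b)))
  refine ⟨this.1, fun q => ?_⟩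
  refine (this.2 q).trans ?_
  simp [mul_add, Finset.sum_add_distrib]
  ring

lemma HD_aA (x₀ : EuclideanSpace ℝ (Fin n)) (β C₀ l : ℝ) (a : Option (Fin n)) (q) :
    dd (ee n a) (aA x₀ β C₀ l) q = l ^ 2 * ph x₀ β C₀ l q ^ 2 *
      (4 * l * kap n β a * yy x₀ a q * qD x₀ β q + 8 * eta n a * kap n β a ^ 2 * yy x₀ a q) := by
  have := HD.cmul (l ^ 2) (((HD_ph x₀ β C₀ l a).mul (HD_ph x₀ β C₀ l a)).mul (HD_qD x₀ β a))
  refine (this.eq q).trans ?_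
  ring

lemma XA_eq (x₀ : EuclideanSpace ℝ (Fin n)) (β C₀ l : ℝ) (q : EuclideanSpace ℝ (Fin n) × ℝ) :
    ∑ a, eta n a * (dd (ee n a) (ph x₀ β C₀ l) q * dd (ee n a) (aA x₀ β C₀ l) q)
      = l ^ 3 * ph x₀ β C₀ l q ^ 3 * (2 * l * qD x₀ β q ^ 2
        + 16 * (‖q.1 - x₀‖ ^ 2 - β ^ 3 * q.2 ^ 2)) := by
  have h1 : ∑ a, eta n a * (dd (ee n a) (ph x₀ β C₀ l) q * dd (ee n a) (aA x₀ β C₀ l) q)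
      = ∑ a, (l ^ 3 * ph x₀ β C₀ l q ^ 3 * 8 * l * qD x₀ β q * (eta n a * kap n β a ^ 2 * (yy x₀ a q * yy x₀ a q))
        + l ^ 3 * ph x₀ β C₀ l q ^ 3 * 16 * (kap n β a ^ 3 * (yy x₀ a q * yy x₀ a q))) := by
    refine Finset.sum_congr rfl fun a _ => ?_
    rw [(HD_ph x₀ β C₀ l a).eq, HD_aA]
    linear_combination (l ^ 3 * ph x₀ β C₀ l q ^ 3 * 16 * (kap n β a ^ 3 * (yy x₀ a q * yy x₀ a q))) * eta_sq a
  rw [h1, Finset.sum_add_distrib, ← Finset.mul_sum, ← Finset.mul_sum]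
  have h2 : ∑ a, kap n β a ^ 3 * (yy x₀ a q * yy x₀ a q) = ‖q.1 - x₀‖ ^ 2 - β ^ 3 * q.2 ^ 2 := by
    rw [← sum_yy, Fintype.sum_option]
    simp [kap, yy]; ring
  have h3 : ∑ a, eta n a * kap n β a ^ 2 * (yy x₀ a q * yy x₀ a q) = qD x₀ β q / 4 := by
    unfold qD; ring
  rw [h2, h3]; ring

/-- The function `θ = μλφ - □φ` with `μ = -2(1+β)`. -/
noncomputable def th (x₀ : EuclideanSpace ℝ (Fin n)) (β C₀ l : ℝ)
    (q : EuclideanSpace ℝ (Fin n) × ℝ) : ℝ :=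
  -2 * (1 + β) * l * ph x₀ β C₀ l q
    - ∑ a, eta n a * dd (ee n a) (dd (ee n a) (ph x₀ β C₀ l)) q

lemma th_smooth (x₀ : EuclideanSpace ℝ (Fin n)) (β C₀ l : ℝ) :
    ContDiff ℝ ∞ (th x₀ β C₀ l) := by
  unfold th
  refine (contDiff_const.mul (ph_smooth x₀ β C₀ l)).sub (ContDiff.sum fun a _ => ?_)
  exact contDiff_const.mul (dd_smooth _ (dd_smooth _ (ph_smooth x₀ β C₀ l)))

/-- Hessian term. -/
lemma H_eq (x₀ : EuclideanSpace ℝ (Fin n)) (β C₀ l : ℝ) (q : EuclideanSpace ℝ (Fin n) × ℝ)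
    (w : Option (Fin n) → ℝ) :
    ∑ a, ∑ b, eta n a * eta n b * (dd (ee n a) (dd (ee n b) (ph x₀ β C₀ l)) q * (w a * w b))
      = 4 * l ^ 2 * ph x₀ β C₀ l q * (∑ a, eta n a * kap n β a * yy x₀ a q * w a) ^ 2
        + 2 * l * ph x₀ β C₀ l q * ∑ a, kap n β a * (w a * w a) := by
  have h1 : ∀ a, ∑ b, eta n a * eta n b * (dd (ee n a) (dd (ee n b) (ph x₀ β C₀ l)) q * (w a * w b))
      = 4 * l ^ 2 * ph x₀ β C₀ l q * ((eta n a * kap n β a * yy x₀ a q * w a) *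
          ∑ b, eta n b * kap n β b * yy x₀ b q * w b)
        + 2 * l * ph x₀ β C₀ l q * (kap n β a * (w a * w a)) := by
    intro a
    have : ∑ b, (if a = b then eta n a * eta n b * ph x₀ β C₀ l q * (2 * l * kap n β a) * (w a * w b) else 0)
        = 2 * l * ph x₀ β C₀ l q * (kap n β a * (w a * w a)) := by
      simp
      linear_combination (2 * l * ph x₀ β C₀ l q * (kap n β a * (w a * w a))) * eta_sq a
    rw [← this]
    simp only [Finset.mul_sum, ← Finset.sum_add_distrib]
    refine Finset.sum_congr rfl fun b _ => ?_
    rw [(HD_dph x₀ β C₀ l a b).eq]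
    split_ifs <;> ring
  rw [Finset.sum_congr rfl fun a _ => h1 a, Finset.sum_add_distrib, ← Finset.mul_sum,
    ← Finset.mul_sum, ← Finset.sum_mul]
  ring

/-- Flux. -/
noncomputable def flux (x₀ : EuclideanSpace ℝ (Fin n)) (β C₀ l s : ℝ)
    (v : EuclideanSpace ℝ (Fin n) × ℝ → ℝ) (a : Option (Fin n)) 
    (p : EuclideanSpace ℝ (Fin n) × ℝ) : ℝ :=
  eta n a * (-2 * (dd (ee n a) v p * ∑ b, eta n b * (dd (ee n b) (ph x₀ β C₀ l) p * dd (ee n b) v p))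
      + dd (ee n a) (ph x₀ β C₀ l) p * (∑ b, eta n b * (dd (ee n b) v p * dd (ee n b) v p))
      - s ^ 2 * (aA x₀ β C₀ l p * (dd (ee n a) (ph x₀ β C₀ l) p * (v p * v p)))
      + th x₀ β C₀ l p * (dd (ee n a) v p * v p)
      - (1 / 2) * (dd (ee n a) (th x₀ β C₀ l) p * (v p * v p)))

/-- Interior pointwise inequality, before absorbing lower order terms. -/
lemma carl_interior (x₀ : EuclideanSpace ℝ (Fin n)) (β C₀ l s : ℝ) (hβ1 : β < 1)
    (hl : 0 < l) (hs : 0 < s)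
    {v Z : EuclideanSpace ℝ (Fin n) × ℝ → ℝ} (hv : ContDiff ℝ ∞ v)
    (hZ : ∀ q, Z q = Real.exp (-s * ph x₀ β C₀ l q) * v q)
    (q : EuclideanSpace ℝ (Fin n) × ℝ) :
    s * ∑ a, dd (ee n a) (flux x₀ β C₀ l s v a) q ≤
      (1 / 2) * (Real.exp (2 * s * ph x₀ β C₀ l q) *
        (∑ a, eta n a * dd (ee n a) (dd (ee n a) Z) q) ^ 2)
      + (2 * s ^ 2 * (1 + β) ^ 2 * l ^ 2 * ph x₀ β C₀ l q ^ 2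
        - s ^ 3 * (l ^ 3 * ph x₀ β C₀ l q ^ 3 * (2 * l * qD x₀ β q ^ 2 - (6 * β + 2) * qD x₀ β q
          + 16 * (1 - β) * ‖q.1 - x₀‖ ^ 2))
        - s * (1 / 2) * (∑ a, eta n a * dd (ee n a) (dd (ee n a) (th x₀ β C₀ l)) q)) * v q ^ 2 := by
  have hdiv := div_identity (ee n) (eta n) s hv (ph_smooth x₀ β C₀ l) (aA_smooth x₀ β C₀ l)
    (th_smooth x₀ β C₀ l) q
  have hbox := conj_box (ee n) (eta n) s hv (ph_smooth x₀ β C₀ l) hZ q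
  rw [H_eq x₀ β C₀ l q (fun a => dd (ee n a) v q), XA_eq] at hdiv
  rw [aA_eq] at hbox
  have hth : (∑ a, eta n a * dd (ee n a) (dd (ee n a) (ph x₀ β C₀ l)) q) + th x₀ β C₀ l q
      = -2 * (1 + β) * l * ph x₀ β C₀ l q := by unfold th; ring
  rw [hth] at hdiv
  change ∑ a, dd (ee n a) (flux x₀ β C₀ l s v a) q = _ at hdiv
  set B := ∑ a, eta n a * dd (ee n a) (dd (ee n a) v) q
  set X := ∑ b, eta n b * (dd (ee n b) (ph x₀ β C₀ l) q * dd (ee n b) v q)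
  set Bp := ∑ a, eta n a * dd (ee n a) (dd (ee n a) (ph x₀ β C₀ l)) q
  set Bt := ∑ a, eta n a * dd (ee n a) (dd (ee n a) (th x₀ β C₀ l)) q
  set Y := ∑ a, eta n a * kap n β a * yy x₀ a q * dd (ee n a) v q
  have hkin : 2 * ∑ a, kap n β a * (dd (ee n a) v q * dd (ee n a) v q)
      + (1 + β) * ∑ a, eta n a * (dd (ee n a) v q * dd (ee n a) v q)
      = (1 - β) * ∑ a, dd (ee n a) v q ^ 2 := by
    simp only [Fintype.sum_option, eta, kap, one_mul, neg_mul, Finset.sum_neg_distrib, ← sq]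
    ring
  set K1 := ∑ a, kap n β a * (dd (ee n a) v q * dd (ee n a) v q)
  set K2 := ∑ a, eta n a * (dd (ee n a) v q * dd (ee n a) v q)
  have hK : 0 ≤ (1 - β) * ∑ a, dd (ee n a) v q ^ 2 :=
    mul_nonneg (by linarith) (Finset.sum_nonneg fun a _ => sq_nonneg _)
  rw [← hkin] at hK
  have hp := ph_pos x₀ β C₀ l q
  have hexp : Real.exp (2 * s * ph x₀ β C₀ l q) * (Real.exp (-s * ph x₀ β C₀ l q)) ^ 2 = 1 := by
    rw [← Real.exp_nat_mul, ← Real.exp_add]; simp; ring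
  have hAq : aA x₀ β C₀ l q = l ^ 2 * ph x₀ β C₀ l q ^ 2 * qD x₀ β q := by unfold aA; ring
  have hD := qD_eq x₀ β q
  set p := ph x₀ β C₀ l q
  set θ := th x₀ β C₀ l q
  set A := aA x₀ β C₀ l q
  set D := qD x₀ β q
  set Pv := B - 2 * s * X - s * v q * Bp + s ^ 2 * v q * A with hPv
  have hR : Real.exp (2 * s * p) * (∑ a, eta n a * dd (ee n a) (dd (ee n a) Z) q) ^ 2 = Pv ^ 2 := by
    rw [hbox, mul_pow, ← mul_assoc, hexp, one_mul]
  rw [hR, hdiv]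
  -- P1 = B + s²Av, Q = -2X + θ v,  P1 + s Q = Pv + s μ l p v
  have hQ : (B + s ^ 2 * A * v q) + s * (-2 * X + θ * v q) = Pv - 2 * (1 + β) * l * p * s * v q := by
    rw [hPv]; linear_combination s * v q * hth
  have h4 : s * ((B + s ^ 2 * A * v q) * (-2 * X + θ * v q)) ≤
      (1 / 2) * Pv ^ 2 + 2 * s ^ 2 * (1 + β) ^ 2 * l ^ 2 * p ^ 2 * v q ^ 2 := by
    have gen : ∀ P Q c : ℝ, P + s * Q = Pv - c → s * (P * Q) ≤ (1 / 2) * Pv ^ 2 + (1 / 2) * c ^ 2 := by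
      intro P Q c h
      have h6 : (P + s * Q) ^ 2 = (Pv - c) ^ 2 := by rw [h]
      linarith [sq_nonneg (P - s * Q), sq_nonneg (Pv + c)]
    refine (gen _ _ _ hQ).trans (le_of_eq ?_)
    ring
  have h8 : 0 ≤ s * (8 * l ^ 2 * p * Y ^ 2) := by positivity
  have h9 : 0 ≤ s * (2 * l * p * (2 * K1 + (1 + β) * K2)) := by positivity
  have h10 : 16 * (‖q.1 - x₀‖ ^ 2 - β ^ 3 * q.2 ^ 2) - 2 * (1 + β) * D
      = - (6 * β + 2) * D + 16 * (1 - β) * ‖q.1 - x₀‖ ^ 2 := by rw [hD]; ring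
  have h11 : l ^ 3 * p ^ 3 * (2 * l * D ^ 2 + 16 * (‖q.1 - x₀‖ ^ 2 - β ^ 3 * q.2 ^ 2))
      + A * (-2 * (1 + β) * l * p) = l ^ 3 * p ^ 3 * (2 * l * D ^ 2 - (6 * β + 2) * D
          + 16 * (1 - β) * ‖q.1 - x₀‖ ^ 2) := by
    rw [hAq]; linear_combination l ^ 3 * p ^ 3 * h10
  rw [h11]
  linarith [h4, h8, h9]

end Concrete

section Boundary
variable {n : ℕ}

lemma flux_none (x₀ : EuclideanSpace ℝ (Fin n)) (β C₀ l s : ℝ)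
    (v : EuclideanSpace ℝ (Fin n) × ℝ → ℝ) (q : EuclideanSpace ℝ (Fin n) × ℝ) :
    flux x₀ β C₀ l s v none q =
      2 * l * ph x₀ β C₀ l q * (β * q.2 * (dd (ee n none) v q ^ 2 + ∑ i, dd (ee n (some i)) v q ^ 2)
        + 2 * dd (ee n none) v q * ∑ i, yy x₀ (some i) q * dd (ee n (some i)) v q)
      + s ^ 2 * (2 * l ^ 3 * ph x₀ β C₀ l q ^ 3 * β * q.2 * qD x₀ β q) * v q ^ 2
      + th x₀ β C₀ l q * (dd (ee n none) v q * v q)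
      - (1 / 2) * dd (ee n none) (th x₀ β C₀ l) q * v q ^ 2 := by
  unfold flux aA
  simp only [fun a => (HD_ph x₀ β C₀ l a).eq q, Fintype.sum_option, eta, kap, one_mul, neg_mul,
    Finset.sum_neg_distrib]
  have h1 : ∑ i : Fin n, ph x₀ β C₀ l q * (2 * l * 1 * yy x₀ (some i) q) * dd (ee n (some i)) v q
      = 2 * l * ph x₀ β C₀ l q * ∑ i, yy x₀ (some i) q * dd (ee n (some i)) v q := by
    rw [Finset.mul_sum]; exact Finset.sum_congr rfl fun i _ => by ring
  have h2 : ∑ i : Fin n, dd (ee n (some i)) v q * dd (ee n (some i)) v q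
      = ∑ i, dd (ee n (some i)) v q ^ 2 := Finset.sum_congr rfl fun i _ => by ring
  have h3 : yy x₀ none q = q.2 := rfl
  rw [h1, h2, h3]
  ring

lemma boundary_real (l p p₀ β T R r σ vt N Yg v s θ θt B : ℝ) (hl : 0 < l) (hp0 : 0 < p₀)
    (hp : p₀ ≤ p) (hβ : 0 < β) (hT : 0 < T) (hR : 0 < R) (hRT : R < β * T) (hr0 : 0 ≤ r)
    (hr : r ≤ R) (hσ : σ ^ 2 = 1) (hN : 0 ≤ N) (hY : Yg ^ 2 ≤ r ^ 2 * N)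
    (hθ : |θ| ≤ B) (hθt : |θt| ≤ B)
    (hs : B ^ 2 / (2 * (2 * l * p₀ * (β * T - R))) + B / 2
      ≤ s ^ 2 * (8 * l ^ 3 * p₀ ^ 3 * (β * T) * ((β * T) ^ 2 - R ^ 2)) / 2) :
    (2 * l * p₀ * (β * T - R)) / 2 * (vt ^ 2 + N)
      + s ^ 2 * (8 * l ^ 3 * p₀ ^ 3 * (β * T) * ((β * T) ^ 2 - R ^ 2)) / 2 * v ^ 2
    ≤ σ * (2 * l * p * (β * (σ * T) * (vt ^ 2 + N) + 2 * vt * Yg)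
      + s ^ 2 * (2 * l ^ 3 * p ^ 3 * β * (σ * T) * (4 * (β ^ 2 * (σ * T) ^ 2 - r ^ 2))) * v ^ 2
      + θ * (vt * v) - (1 / 2) * θt * v ^ 2) := by
  have hrT : r ^ 2 ≤ R ^ 2 := by gcongr
  have hYR : Yg ^ 2 ≤ R ^ 2 * N := hY.trans (by gcongr)
  have a1 : (β * T - R) * (vt ^ 2 + N) ≤ β * T * (vt ^ 2 + N) + 2 * (σ * (vt * Yg)) := by
    have : 0 ≤ R * (R * (vt ^ 2 + N) + 2 * (σ * (vt * Yg))) := by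
      have h := sq_nonneg (R * vt + σ * Yg)
      have h' : (R * vt + σ * Yg) ^ 2 = R ^ 2 * vt ^ 2 + 2 * R * σ * vt * Yg + Yg ^ 2 := by
        linear_combination Yg ^ 2 * hσ
      nlinarith
    have := nonneg_of_mul_nonneg_right this hR
    linarith
  have hvN : 0 ≤ vt ^ 2 + N := by positivity
  have hβT : 0 ≤ β * T - R := by linarith
  have a2 : 2 * l * p₀ * (β * T - R) * (vt ^ 2 + N)
      ≤ 2 * l * p * (β * T * (vt ^ 2 + N) + 2 * (σ * (vt * Yg))) := by
    calc 2 * l * p₀ * (β * T - R) * (vt ^ 2 + N) = 2 * l * p₀ * ((β * T - R) * (vt ^ 2 + N)) := by ring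
      _ ≤ 2 * l * p * ((β * T - R) * (vt ^ 2 + N)) := by gcongr
      _ ≤ _ := by
        have : 0 < p := hp0.trans_le hp
        gcongr
  have hd : 0 ≤ (β * T) ^ 2 - R ^ 2 := by
    have : R ^ 2 ≤ (β * T) ^ 2 := by gcongr
    linarith
  have a3 : s ^ 2 * (8 * l ^ 3 * p₀ ^ 3 * (β * T) * ((β * T) ^ 2 - R ^ 2)) * v ^ 2 ≤
      s ^ 2 * (8 * l ^ 3 * p ^ 3 * (β * T) * ((β * T) ^ 2 - r ^ 2)) * v ^ 2 := by
    have : 0 < p := hp0.trans_le hp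
    gcongr
  set c1 := 2 * l * p₀ * (β * T - R) with hc1
  have hc1p : 0 < c1 := by
    have : 0 < β * T - R := by linarith
    positivity
  set c2 := 8 * l ^ 3 * p₀ ^ 3 * (β * T) * ((β * T) ^ 2 - R ^ 2)
  have a4 : |θ * (vt * v)| ≤ c1 / 2 * vt ^ 2 + B ^ 2 / (2 * c1) * v ^ 2 := by
    have hb : |θ * (vt * v)| ≤ B * (|vt| * |v|) := by
      rw [abs_mul, abs_mul]; gcongr
    refine hb.trans ?_
    have : c1 / 2 * vt ^ 2 + B ^ 2 / (2 * c1) * v ^ 2 - B * (|vt| * |v|)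
        = (c1 * |vt| - B * |v|) ^ 2 / (2 * c1) := by
      rw [← sq_abs vt, ← sq_abs v]; field_simp; ring
    have h2 : 0 ≤ (c1 * |vt| - B * |v|) ^ 2 / (2 * c1) := by positivity
    linarith
  have hσa : |σ| = 1 := by
    have h0 : (σ - 1) * (σ + 1) = 0 := by linear_combination hσ
    rcases mul_eq_zero.1 h0 with h | h
    · rw [show σ = 1 by linarith]; simp
    · rw [show σ = -1 by linarith]; simp
  have a5 : -(σ * (θ * (vt * v))) ≤ |θ * (vt * v)| := by
    have := neg_abs_le (σ * (θ * (vt * v)))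
    rw [abs_mul, hσa, one_mul] at this; linarith
  have a6 : σ * θt * v ^ 2 ≤ B * v ^ 2 := by
    have : σ * θt ≤ B := (le_abs_self _).trans (by rw [abs_mul, hσa, one_mul]; exact hθt)
    gcongr
  have a7 := mul_le_mul_of_nonneg_right hs (sq_nonneg v)
  have a8 : 0 ≤ c1 / 2 * N := by positivity
  have e : σ * (2 * l * p * (β * (σ * T) * (vt ^ 2 + N) + 2 * vt * Yg)
      + s ^ 2 * (2 * l ^ 3 * p ^ 3 * β * (σ * T) * (4 * (β ^ 2 * (σ * T) ^ 2 - r ^ 2))) * v ^ 2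
      + θ * (vt * v) - (1 / 2) * θt * v ^ 2)
      = 2 * l * p * (β * T * (vt ^ 2 + N) + 2 * (σ * (vt * Yg)))
      + s ^ 2 * (8 * l ^ 3 * p ^ 3 * (β * T) * ((β * T) ^ 2 - r ^ 2)) * v ^ 2
      + σ * (θ * (vt * v)) - (1 / 2) * (σ * θt * v ^ 2) := by
    have h4 : σ ^ 4 = 1 := by rw [show σ ^ 4 = (σ ^ 2) ^ 2 by ring, hσ]; norm_num
    linear_combination (2 * l * p * (β * T * (vt ^ 2 + N)) - s ^ 2 * (8 * l ^ 3 * p ^ 3 * (β * T) * r ^ 2) * v ^ 2) * hσ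
      + s ^ 2 * (8 * l ^ 3 * p ^ 3 * (β * T) * ((β * T) ^ 2)) * v ^ 2 * h4
  rw [e]
  linarith

lemma boundary_pt (x₀ : EuclideanSpace ℝ (Fin n)) (β C₀ l s T R p₀ B σ : ℝ) (hl : 0 < l)
    (hp0 : 0 < p₀) (hβ : 0 < β) (hT : 0 < T) (hR : 0 < R) (hRT : R < β * T) (hσ : σ ^ 2 = 1)
    (v : EuclideanSpace ℝ (Fin n) × ℝ → ℝ) (x : EuclideanSpace ℝ (Fin n))
    (hp : p₀ ≤ ph x₀ β C₀ l (x, σ * T)) (hr : ‖x - x₀‖ ≤ R)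
    (hθ : |th x₀ β C₀ l (x, σ * T)| ≤ B) (hθt : |dd (ee n none) (th x₀ β C₀ l) (x, σ * T)| ≤ B)
    (hs : B ^ 2 / (2 * (2 * l * p₀ * (β * T - R))) + B / 2
      ≤ s ^ 2 * (8 * l ^ 3 * p₀ ^ 3 * (β * T) * ((β * T) ^ 2 - R ^ 2)) / 2) :
    (2 * l * p₀ * (β * T - R)) / 2 * (∑ a, dd (ee n a) v (x, σ * T) ^ 2)
      + s ^ 2 * (8 * l ^ 3 * p₀ ^ 3 * (β * T) * ((β * T) ^ 2 - R ^ 2)) / 2 * v (x, σ * T) ^ 2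
    ≤ σ * flux x₀ β C₀ l s v none (x, σ * T) := by
  rw [flux_none, Fintype.sum_option, qD_eq]
  refine boundary_real l _ p₀ β T R ‖x - x₀‖ σ _ _ _ _ s _ _ B hl hp0 hp hβ hT hR hRT
    (norm_nonneg _) hr hσ (Finset.sum_nonneg fun i _ => sq_nonneg _) ?_ hθ hθt hs
  have := sum_yy x₀ (x, σ * T)
  simp only at this
  rw [← this]
  simp only [← sq]
  exact Finset.sum_mul_sq_le_sq_mul_sq _ _ _

end Boundary

section Integration
variable {n : ℕ}

lemma dd_zero {K : Set (EuclideanSpace ℝ (Fin n))} (hK : IsClosed K) (e)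
    {f : EuclideanSpace ℝ (Fin n) × ℝ → ℝ} (hf : ∀ q, q.1 ∉ K → f q = 0) :
    ∀ q, q.1 ∉ K → dd e f q = 0 := by
  intro q hq
  have : f =ᶠ[nhds q] fun _ => 0 := by
    have ho : IsOpen {p : EuclideanSpace ℝ (Fin n) × ℝ | p.1 ∉ K} :=
      hK.isOpen_compl.preimage continuous_fst
    filter_upwards [ho.mem_nhds hq] with p hp using hf p hp
  unfold dd
  rw [this.fderiv_eq]; simp

lemma slice_t {f : EuclideanSpace ℝ (Fin n) × ℝ → ℝ} (hf : ContDiff ℝ ∞ f) (x) (t : ℝ) :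
    HasDerivAt (fun t => f (x, t)) (dd (ee n none) f (x, t)) t := by
  have h1 : HasDerivAt (fun t : ℝ => (x, t)) ((0 : EuclideanSpace ℝ (Fin n)), (1 : ℝ)) t :=
    (hasDerivAt_const t x).prodMk (hasDerivAt_id t)
  exact ((hf.differentiable (by simp) (x, t)).hasFDerivAt).comp_hasDerivAt t h1

lemma slice_x {f : EuclideanSpace ℝ (Fin n) × ℝ → ℝ} (hf : ContDiff ℝ ∞ f) (x) (t : ℝ) (i : Fin n) :
    fderiv ℝ (fun y => f (y, t)) x (EuclideanSpace.single i 1) = dd (ee n (some i)) f (x, t) := by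
  have h1 : HasFDerivAt (fun y : EuclideanSpace ℝ (Fin n) => (y, t))
      (ContinuousLinearMap.inl ℝ (EuclideanSpace ℝ (Fin n)) ℝ) x := by
    exact (hasFDerivAt_id x).prodMk (hasFDerivAt_const t x)
  have := ((hf.differentiable (by simp) (x, t)).hasFDerivAt).comp x h1
  have h2 : fderiv ℝ (fun y => f (y, t)) x = _ := this.fderiv
  rw [h2]; simp [dd, ee]

lemma slice_integrable {K : Set (EuclideanSpace ℝ (Fin n))} (hK : IsCompact K)
    {G : EuclideanSpace ℝ (Fin n) × ℝ → ℝ} (hG : Continuous G) (h0 : ∀ q, q.1 ∉ K → G q = 0) (t : ℝ) :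
    Integrable (fun x => G (x, t)) := by
  refine Continuous.integrable_of_hasCompactSupport (by fun_prop) ?_
  exact HasCompactSupport.intro hK fun x hx => h0 (x, t) hx

lemma prod_integrable {K : Set (EuclideanSpace ℝ (Fin n))} (hK : IsCompact K) (T : ℝ)
    {G : EuclideanSpace ℝ (Fin n) × ℝ → ℝ} (hG : Continuous G) (h0 : ∀ q, q.1 ∉ K → G q = 0) :
    Integrable (fun p : ℝ × EuclideanSpace ℝ (Fin n) => G (p.2, p.1))
      ((volume.restrict (Set.Ioo (-T) T)).prod volume) := by
  have h1 : IntegrableOn (fun p : ℝ × EuclideanSpace ℝ (Fin n) => G (p.2, p.1))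
      (Set.Icc (-T) T ×ˢ K) (volume.prod volume) := by
    refine ContinuousOn.integrableOn_compact (isCompact_Icc.prod hK) ?_
    exact Continuous.continuousOn (by fun_prop)
  have h2 : IntegrableOn (fun p : ℝ × EuclideanSpace ℝ (Fin n) => G (p.2, p.1))
      (Set.Icc (-T) T ×ˢ Set.univ) (volume.prod volume) := by
    refine h1.of_forall_sdiff_eq_zero (measurableSet_Icc.prod MeasurableSet.univ) ?_
    rintro ⟨t, x⟩ ⟨⟨ht, _⟩, hn⟩
    exact h0 (x, t) fun hx => hn ⟨ht, hx⟩
  have h3 := h2.mono_set (Set.prod_mono (Set.Ioo_subset_Icc_self (a := -T) (b := T)) (le_refl Set.univ))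
  unfold IntegrableOn at h3
  rwa [← Measure.prod_restrict, Measure.restrict_univ] at h3

lemma int_div {K : Set (EuclideanSpace ℝ (Fin n))} (hK : IsCompact K) {T : ℝ} (hT : 0 < T)
    {F : Option (Fin n) → EuclideanSpace ℝ (Fin n) × ℝ → ℝ} (hF : ∀ a, ContDiff ℝ ∞ (F a))
    (h0 : ∀ a q, q.1 ∉ K → F a q = 0) :
    ∫ t in Set.Ioo (-T) T, ∫ x, ∑ a, dd (ee n a) (F a) (x, t)
      = (∫ x, F none (x, T)) - ∫ x, F none (x, -T) := by
  have hz := fun a => dd_zero hK.isClosed (ee n a) (h0 a)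
  have hc := fun a => (dd_smooth (ee n a) (hF a)).continuous
  have hx : ∀ t i, ∫ x, dd (ee n (some i)) (F (some i)) (x, t) = 0 := by
    intro t i
    have hi := slice_integrable hK (hF (some i)).continuous (h0 (some i)) t
    have hi' := slice_integrable hK (hc (some i)) (hz (some i)) t
    have hd : Differentiable ℝ (fun y => F (some i) (y, t)) := by
      have : ContDiff ℝ ∞ (fun y => F (some i) (y, t)) := (hF (some i)).comp (by fun_prop)
      exact this.differentiable (by simp)
    have := integral_mul_fderiv_eq_neg_fderiv_mul_of_integrable (μ := volume)
      (f := fun _ : EuclideanSpace ℝ (Fin n) => (1 : ℝ)) (g := fun y => F (some i) (y, t))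
      (v := EuclideanSpace.single i 1) (by simp)
      (by simpa only [slice_x (hF (some i)), one_mul] using hi') (by simpa only [one_mul] using hi)
      (fun _ _ => by fun_prop) (fun y _ => hd y)
    simpa only [slice_x (hF (some i)), one_mul, fderiv_fun_const, Pi.zero_apply,
      _root_.zero_apply, zero_mul, integral_zero, neg_zero] using this
  have hs : ∀ t, ∫ x, ∑ a, dd (ee n a) (F a) (x, t) = ∫ x, dd (ee n none) (F none) (x, t) := by
    intro t
    rw [integral_finsetSum _ fun a _ => slice_integrable hK (hc a) (hz a) t, Fintype.sum_option]
    simp [hx]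
  simp only [hs]
  rw [integral_integral_swap (f := fun t x => dd (ee n none) (F none) (x, t))
    (prod_integrable hK T (hc none) (hz none))]
  rw [← integral_sub (slice_integrable hK (hF none).continuous (h0 none) T)
    (slice_integrable hK (hF none).continuous (h0 none) (-T))]
  refine integral_congr_ae (Filter.Eventually.of_forall fun x => ?_)
  simp only
  rw [← integral_Ioc_eq_integral_Ioo, ← intervalIntegral.integral_of_le (by linarith)]
  refine intervalIntegral.integral_eq_sub_of_hasDerivAt (fun t _ => slice_t (hF none) x t) ?_
  exact Continuous.intervalIntegrable (by have := hc none; fun_prop) _ _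

end Integration

section Final
variable {n : ℕ}

lemma flux_smooth (x₀ : EuclideanSpace ℝ (Fin n)) (β C₀ l s : ℝ)
    {v : EuclideanSpace ℝ (Fin n) × ℝ → ℝ} (hv : ContDiff ℝ ∞ v) (a : Option (Fin n)) :
    ContDiff ℝ ∞ (flux x₀ β C₀ l s v a) := by
  have h1 := fun b => dd_smooth (ee n b) hv
  have h2 := fun b => dd_smooth (ee n b) (ph_smooth x₀ β C₀ l)
  have h3 := fun b => dd_smooth (ee n b) (th_smooth x₀ β C₀ l)
  have h4 := aA_smooth x₀ β C₀ l
  have h5 := th_smooth x₀ β C₀ l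
  unfold flux
  refine contDiff_const.mul (((((contDiff_const.mul ((h1 a).mul (ContDiff.sum fun b _ => ?_))).add
    ((h2 a).mul (ContDiff.sum fun b _ => ?_))).sub (contDiff_const.mul (h4.mul ((h2 a).mul (hv.mul hv))))).add
    (h5.mul ((h1 a).mul hv))).sub (contDiff_const.mul ((h3 a).mul (hv.mul hv))))
  · exact contDiff_const.mul ((h2 b).mul (h1 b))
  · exact contDiff_const.mul ((h1 b).mul (h1 b))

lemma flux_zero (x₀ : EuclideanSpace ℝ (Fin n)) (β C₀ l s : ℝ)
    {v : EuclideanSpace ℝ (Fin n) × ℝ → ℝ} (a : Option (Fin n)) (q)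
    (h : v q = 0) (h' : ∀ b, dd (ee n b) v q = 0) : flux x₀ β C₀ l s v a q = 0 := by
  simp [flux, h, h']

lemma grad_sq {f : EuclideanSpace ℝ (Fin n) → ℝ} (x : EuclideanSpace ℝ (Fin n)) :
    ‖gradient f x‖ ^ 2 = ∑ i, fderiv ℝ f x (EuclideanSpace.single i 1) ^ 2 := by
  rw [EuclideanSpace.norm_sq_eq]
  refine Finset.sum_congr rfl fun i _ => ?_
  have : inner ℝ (gradient f x) (EuclideanSpace.single i (1 : ℝ)) = fderiv ℝ f x (EuclideanSpace.single i 1) := by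
    unfold gradient
    rw [InnerProductSpace.toDual_symm_apply]
  rw [← this, EuclideanSpace.inner_single_right]
  simp

/-- All bounds on the weight, on the compact cylinder. -/
lemma weight_bounds (Ω : Set (EuclideanSpace ℝ (Fin n))) (hΩb : Bornology.IsBounded Ω)
    (T : ℝ) (x₀ : EuclideanSpace ℝ (Fin n)) (β C₀ l : ℝ) :
    ∃ B > (0:ℝ), ∀ x ∈ Ω, ∀ t ∈ Set.Icc (-T) T,
      |th x₀ β C₀ l (x, t)| ≤ B ∧ |dd (ee n none) (th x₀ β C₀ l) (x, t)| ≤ B ∧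
      (∑ a, dd (ee n a) (ph x₀ β C₀ l) (x, t) ^ 2) ≤ B ∧
      |∑ a, eta n a * dd (ee n a) (dd (ee n a) (th x₀ β C₀ l)) (x, t)| ≤ B ∧
      ph x₀ β C₀ l (x, t) ≤ B ∧ 1 / B ≤ ph x₀ β C₀ l (x, t) := by
  have hK : IsCompact (closure Ω ×ˢ Set.Icc (-T) T) :=
    (hΩb.isCompact_closure).prod isCompact_Icc
  have c1 := (th_smooth x₀ β C₀ l).continuous
  have c2 := (dd_smooth (ee n none) (th_smooth x₀ β C₀ l)).continuous
  have c3 := fun a => (dd_smooth (ee n a) (ph_smooth x₀ β C₀ l)).continuous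
  have c4 := fun a => (dd_smooth (ee n a) (dd_smooth (ee n a) (th_smooth x₀ β C₀ l))).continuous
  have c5 := (ph_smooth x₀ β C₀ l).continuous
  have c6 : Continuous fun q => (ph x₀ β C₀ l q)⁻¹ := c5.inv₀ fun q => (ph_pos x₀ β C₀ l q).ne'
  have bd : ∀ f : EuclideanSpace ℝ (Fin n) × ℝ → ℝ, Continuous f →
      ∃ C > (0:ℝ), ∀ x ∈ Ω, ∀ t ∈ Set.Icc (-T) T, |f (x, t)| ≤ C := by
    intro f hf
    obtain ⟨C, hC⟩ := hK.exists_bound_of_continuousOn hf.continuousOn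
    refine ⟨|C| + 1, by positivity, fun x hx t ht => ?_⟩
    have := hC (x, t) ⟨subset_closure hx, ht⟩
    rw [Real.norm_eq_abs] at this
    linarith [le_abs_self C]
  obtain ⟨B1, p1, h1⟩ := bd _ c1
  obtain ⟨B2, p2, h2⟩ := bd _ c2
  obtain ⟨B3, p3, h3⟩ := bd (fun q => ∑ a, dd (ee n a) (ph x₀ β C₀ l) q ^ 2) (by fun_prop)
  obtain ⟨B4, p4, h4⟩ := bd (fun q => ∑ a, eta n a * dd (ee n a) (dd (ee n a) (th x₀ β C₀ l)) q) (by fun_prop)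
  obtain ⟨B5, p5, h5⟩ := bd _ c5
  obtain ⟨B6, p6, h6⟩ := bd _ c6
  refine ⟨B1 + B2 + B3 + B4 + B5 + B6, by positivity, fun x hx t ht => ⟨?_, ?_, ?_, ?_, ?_, ?_⟩⟩
  · linarith [h1 x hx t ht]
  · linarith [h2 x hx t ht]
  · linarith [h3 x hx t ht, le_abs_self (∑ a, dd (ee n a) (ph x₀ β C₀ l) (x, t) ^ 2)]
  · linarith [h4 x hx t ht]
  · linarith [h5 x hx t ht, le_abs_self (ph x₀ β C₀ l (x, t))]
  · have h := (le_abs_self _).trans (h6 x hx t ht)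
    rw [one_div]
    refine inv_le_of_inv_le₀ (ph_pos x₀ β C₀ l (x, t)) ?_
    linarith

lemma weight_lower {β δ l D r : ℝ} (hβ0 : 0 < β) (hβ1 : β < 1) (hδ : 0 < δ)
    (hl : l = 1 / ((1 - β) * δ ^ 2)) (hr : δ ≤ r) :
    8 / l ≤ 2 * l * D ^ 2 - (6 * β + 2) * D + 16 * (1 - β) * r ^ 2 := by
  have h1 : 0 < 1 - β := by linarith
  have hlp : 0 < l := by rw [hl]; positivity
  have h2 : (1 - β) * δ ^ 2 = 1 / l := by rw [hl]; simp
  have h3 : 16 * (1 - β) * δ ^ 2 ≤ 16 * (1 - β) * r ^ 2 := by gcongr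
  have h4 : 16 * (1 - β) * δ ^ 2 = 16 / l := by linear_combination 16 * h2
  have h5 : 0 ≤ 2 * l * D ^ 2 - (6 * β + 2) * D + 8 / l := by
    have : 2 * l * D ^ 2 - (6 * β + 2) * D + 8 / l
      = ((4 * l * D - (6 * β + 2)) ^ 2 + (64 - (6 * β + 2) ^ 2)) / (8 * l) := by
      field_simp; ring
    rw [this]
    have : 0 ≤ 64 - (6 * β + 2) ^ 2 := by nlinarith
    positivity
  have h6 : 16 / l = 8 / l + 8 / l := by ring
  linarith

end Final

set_option maxHeartbeats 2000000 in
/-- **Carleman estimate with pointwise terms at time `-T` (Corollary 2.8)** specialized to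
functions supported, in the space variable, in a compact subset of `Ω`:
`s∫_Ω e^{2sφ(-T)}(|∂ₜz(-T)|² + |∇z(-T)|²) + s³∫_Ω e^{2sφ(-T)}|z(-T)|²
  ≤ M∫∫ e^{2sφ}|∂ₜ²z - Δz|²`. -/
theorem carleman_pointwise_at_minus_T
    (n : ℕ) (hn : 1 ≤ n)
    (Ω : Set (EuclideanSpace ℝ (Fin n))) (hΩo : IsOpen Ω) (hΩb : Bornology.IsBounded Ω)
    (T : ℝ) (hT : 0 < T)
    (x₀ : EuclideanSpace ℝ (Fin n)) (hx₀ : x₀ ∉ closure Ω)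
    (β : ℝ) (hβ : β ∈ Set.Ioo (0:ℝ) 1)
    (htime : sSup ((fun x => ‖x - x₀‖) '' Ω) < β * T)
    (C₀ : ℝ) (hC₀ : 0 < C₀)
    (hψ : ∀ x ∈ Ω, ∀ t ∈ Set.Ioo (-T) T, 1 ≤ psi x₀ β C₀ x t) :
    ∃ l > (0:ℝ), ∃ s₀ > (0:ℝ), ∃ M > (0:ℝ), ∀ s ≥ s₀,
      ∀ z : EuclideanSpace ℝ (Fin n) → ℝ → ℝ,
        ContDiff ℝ (⊤ : ℕ∞) (fun q : EuclideanSpace ℝ (Fin n) × ℝ => z q.1 q.2) →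
        (∃ K : Set (EuclideanSpace ℝ (Fin n)), IsCompact K ∧ K ⊆ Ω ∧
          ∀ x ∉ K, ∀ t : ℝ, z x t = 0) →
        s * (∫ x in Ω, Real.exp (2 * s * phi x₀ β C₀ l x (-T)) *
              ((deriv (z x) (-T)) ^ 2 + ‖gradient (fun y => z y (-T)) x‖ ^ 2))
          + s ^ 3 * (∫ x in Ω, Real.exp (2 * s * phi x₀ β C₀ l x (-T)) * (z x (-T)) ^ 2)
        ≤ M * ∫ t in Set.Ioo (-T) T, ∫ x in Ω, Real.exp (2 * s * phi x₀ β C₀ l x t) *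
            (deriv (deriv (z x)) t - lap (fun y => z y t) x) ^ 2 := by
  obtain ⟨hβ0, hβ1⟩ := hβ
  have hβ4 : (1 + β) ^ 2 ≤ 4 := by nlinarith
  -- the upper bound `R`
  have hbdd : BddAbove ((fun x => ‖x - x₀‖) '' Ω) := by
    obtain ⟨C, hC⟩ := hΩb.exists_norm_le
    refine ⟨C + ‖x₀‖, ?_⟩
    rintro _ ⟨x, hx, rfl⟩
    exact (norm_sub_le _ _).trans (by linarith [hC x hx])
  have hS0 : 0 ≤ sSup ((fun x => ‖x - x₀‖) '' Ω) := by
    refine Real.sSup_nonneg ?_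
    rintro _ ⟨x, hx, rfl⟩
    exact norm_nonneg _
  have hβT : 0 < β * T := by positivity
  obtain ⟨R, hR, hRT, hrR⟩ : ∃ R > (0:ℝ), R < β * T ∧ ∀ x ∈ Ω, ‖x - x₀‖ ≤ R := by
    refine ⟨(sSup ((fun x => ‖x - x₀‖) '' Ω) + β * T) / 2, by linarith, by linarith, fun x hx => ?_⟩
    have := le_csSup hbdd (Set.mem_image_of_mem (fun x => ‖x - x₀‖) hx)
    linarith
  -- the lower bound `δ`
  obtain ⟨δ, hδ, hδr⟩ : ∃ δ > (0:ℝ), ∀ x ∈ Ω, δ ≤ ‖x - x₀‖ := by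
    obtain ⟨δ, hδ, hb⟩ := Metric.isOpen_iff.1 (isClosed_closure (s := Ω)).isOpen_compl x₀ hx₀
    refine ⟨δ, hδ, fun x hx => ?_⟩
    by_contra hlt
    push Not at hlt
    exact hb (by rwa [Metric.mem_ball, dist_eq_norm]) (subset_closure hx)
  obtain ⟨l, hl⟩ : ∃ l, l = 1 / ((1 - β) * δ ^ 2) := ⟨_, rfl⟩
  have hlp : 0 < l := by
    have : 0 < 1 - β := by linarith
    rw [hl]; positivity
  obtain ⟨B, hB, hbd⟩ := weight_bounds Ω hΩb T x₀ β C₀ l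
  set p₀ := 1 / B with hp₀
  have hp₀p : 0 < p₀ := by positivity
  obtain ⟨c1, hc1⟩ : ∃ c1, c1 = 2 * l * p₀ * (β * T - R) := ⟨_, rfl⟩
  obtain ⟨c2, hc2⟩ : ∃ c2, c2 = 8 * l ^ 3 * p₀ ^ 3 * (β * T) * ((β * T) ^ 2 - R ^ 2) := ⟨_, rfl⟩
  obtain ⟨c3, hc3⟩ : ∃ c3, c3 = 8 * l ^ 2 * p₀ ^ 3 := ⟨_, rfl⟩
  have hc1p : 0 < c1 := by
    have : 0 < β * T - R := by linarith
    rw [hc1]; positivity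
  have hc2p : 0 < c2 := by
    have : R ^ 2 < (β * T) ^ 2 := by gcongr
    have : 0 < (β * T) ^ 2 - R ^ 2 := by linarith
    rw [hc2]; positivity
  have hc3p : 0 < c3 := by rw [hc3]; positivity
  refine ⟨l, hlp, 1 + (8 * l ^ 2 * B ^ 2 + B / 2) / c3 + (B ^ 2 / (2 * c1) + B / 2) / (c2 / 2),
    by positivity, (4 / c1 + 2 * (1 + 2 * B) / c2) / 2, by positivity, ?_⟩
  intro s hs z hz ⟨K, hK, hKΩ, hzK⟩
  have hq1 : 0 ≤ (8 * l ^ 2 * B ^ 2 + B / 2) / c3 := by positivity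
  have hq2 : 0 ≤ (B ^ 2 / (2 * c1) + B / 2) / (c2 / 2) := by positivity
  have hs1 : 1 ≤ s := by linarith
  have hs0 : 0 < s := by linarith
  have hss : s ≤ s ^ 2 := by rw [sq]; exact le_mul_of_one_le_left hs0.le hs1
  have hsA : 8 * l ^ 2 * B ^ 2 + B / 2 ≤ s * c3 := by
    rw [← div_le_iff₀ hc3p]; linarith
  have hsB : B ^ 2 / (2 * c1) + B / 2 ≤ s ^ 2 * c2 / 2 := by
    have : B ^ 2 / (2 * c1) + B / 2 ≤ s * (c2 / 2) := by
      rw [← div_le_iff₀ (by positivity)]; linarith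
    have h2 : s * (c2 / 2) ≤ s ^ 2 * (c2 / 2) := by
      gcongr
    linarith
  clear hs hq1 hq2
  obtain ⟨M, hM⟩ : ∃ M, M = 4 / c1 + 2 * (1 + 2 * B) / c2 := ⟨_, rfl⟩
  rw [← hM]
  have hMp : 0 < M := by rw [hM]; positivity
  -- the functions on space-time
  obtain ⟨Z, hZdef⟩ : ∃ Z : EuclideanSpace ℝ (Fin n) × ℝ → ℝ, Z = fun q => z q.1 q.2 := ⟨_, rfl⟩
  have hZs : ContDiff ℝ ∞ Z := by rw [hZdef]; exact hz
  obtain ⟨v, hvdef⟩ : ∃ v : EuclideanSpace ℝ (Fin n) × ℝ → ℝ,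
      v = fun q => Real.exp (s * ph x₀ β C₀ l q) * Z q := ⟨_, rfl⟩
  have hvs : ContDiff ℝ ∞ v := by
    rw [hvdef]
    exact (contDiff_const.mul (ph_smooth x₀ β C₀ l)).exp.mul hZs
  have hZv : ∀ q, Z q = Real.exp (-s * ph x₀ β C₀ l q) * v q := by
    intro q
    rw [hvdef]
    simp only
    rw [← mul_assoc, ← Real.exp_add]
    simp
  have hZ0 : ∀ q, q.1 ∉ K → Z q = 0 := by
    intro q hq; rw [hZdef]; exact hzK q.1 hq q.2
  have hv0 : ∀ q, q.1 ∉ K → v q = 0 := by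
    intro q hq; rw [hvdef]; simp [hZ0 q hq]
  have hdv0 := fun b => dd_zero hK.isClosed (ee n b) hv0
  have hdZ0 := fun b => dd_zero hK.isClosed (ee n b) hZ0
  have hddZ0 := fun b => dd_zero hK.isClosed (ee n b) (hdZ0 b)
  have hFs := flux_smooth x₀ β C₀ l s hvs
  have hF0 : ∀ a q, q.1 ∉ K → flux x₀ β C₀ l s v a q = 0 := fun a q hq =>
    flux_zero x₀ β C₀ l s a q (hv0 q hq) (fun b => hdv0 b q hq)
  -- rewriting the statement
  have e1 : ∀ x t, deriv (z x) t = dd (ee n none) Z (x, t) := by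
    intro x t
    have := (slice_t hZs x t).deriv
    rw [hZdef] at this ⊢
    exact this
  have e2 : ∀ x t, deriv (deriv (z x)) t = dd (ee n none) (dd (ee n none) Z) (x, t) := by
    intro x t
    have : deriv (z x) = fun t => dd (ee n none) Z (x, t) := funext (e1 x)
    rw [this]
    exact (slice_t (dd_smooth _ hZs) x t).deriv
  have e3 : ∀ x t i, fderiv ℝ (fun y => z y t) x (EuclideanSpace.single i 1)
      = dd (ee n (some i)) Z (x, t) := by
    intro x t i
    rw [← slice_x hZs x t i, hZdef]
  have e4 : ∀ x t, lap (fun y => z y t) x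
      = ∑ i, dd (ee n (some i)) (dd (ee n (some i)) Z) (x, t) := by
    intro x t
    unfold lap
    refine Finset.sum_congr rfl fun i _ => ?_
    simp only [e3]
    exact slice_x (dd_smooth _ hZs) x t i
  have e5 : ∀ x t, deriv (deriv (z x)) t - lap (fun y => z y t) x
      = ∑ a, eta n a * dd (ee n a) (dd (ee n a) Z) (x, t) := by
    intro x t
    rw [e2, e4, Fintype.sum_option]
    simp [eta, sub_eq_add_neg]
  have e6 : ∀ x t, (deriv (z x) t) ^ 2 + ‖gradient (fun y => z y t) x‖ ^ 2
      = ∑ a, dd (ee n a) Z (x, t) ^ 2 := by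
    intro x t
    rw [grad_sq, Fintype.sum_option, e1]
    simp only [e3]
  have e7 : ∀ x t, z x t = Z (x, t) := by intro x t; rw [hZdef]
  simp only [e5, e6, phi_eq]
  simp only [e7]
  have cph := (ph_smooth x₀ β C₀ l).continuous
  have cZ := hZs.continuous
  have cdZ := fun a => (dd_smooth (ee n a) hZs).continuous
  have cddZ := fun a => (dd_smooth (ee n a) (dd_smooth (ee n a) hZs)).continuous
  -- replace integrals over Ω by integrals over the whole space
  have hfull : ∀ f : EuclideanSpace ℝ (Fin n) → ℝ, (∀ x, x ∉ K → f x = 0) →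
      ∫ x in Ω, f x = ∫ x, f x := fun f hf =>
    setIntegral_eq_integral_of_forall_compl_eq_zero fun x hx => hf x fun h => hx (hKΩ h)
  have z1 : ∀ q : EuclideanSpace ℝ (Fin n) × ℝ, q.1 ∉ K →
      Real.exp (2 * s * ph x₀ β C₀ l q) * ∑ a, dd (ee n a) Z q ^ 2 = 0 := by
    intro q hq; simp [fun a => hdZ0 a q hq]
  have z2 : ∀ q : EuclideanSpace ℝ (Fin n) × ℝ, q.1 ∉ K →
      Real.exp (2 * s * ph x₀ β C₀ l q) * Z q ^ 2 = 0 := by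
    intro q hq; simp [hZ0 q hq]
  have z3 : ∀ q : EuclideanSpace ℝ (Fin n) × ℝ, q.1 ∉ K →
      Real.exp (2 * s * ph x₀ β C₀ l q) * (∑ a, eta n a * dd (ee n a) (dd (ee n a) Z) q) ^ 2 = 0 := by
    intro q hq; simp [fun a => hddZ0 a q hq]
  have k1 : Continuous fun q => Real.exp (2 * s * ph x₀ β C₀ l q) * ∑ a, dd (ee n a) Z q ^ 2 := by
    fun_prop
  have k2 : Continuous fun q => Real.exp (2 * s * ph x₀ β C₀ l q) * Z q ^ 2 := by
    fun_prop
  have k3 : Continuous fun q => Real.exp (2 * s * ph x₀ β C₀ l q) *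
      (∑ a, eta n a * dd (ee n a) (dd (ee n a) Z) q) ^ 2 := by
    fun_prop
  rw [hfull _ fun x hx => z1 (x, -T) hx, hfull _ fun x hx => z2 (x, -T) hx]
  simp only [fun t => hfull _ fun x hx => z3 (x, t) hx]
  -- boundary estimates
  have hTm : -T ∈ Set.Icc (-T) T := ⟨le_refl _, by linarith⟩
  have hTp : T ∈ Set.Icc (-T) T := ⟨by linarith, le_refl _⟩
  have bplus : ∀ x, 0 ≤ flux x₀ β C₀ l s v none (x, T) := by
    intro x
    by_cases hx : x ∈ K
    · have hxΩ := hKΩ hx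
      obtain ⟨b1, b2, b3, b4, b5, b6⟩ := hbd x hxΩ T hTp
      have := boundary_pt x₀ β C₀ l s T R p₀ B 1 hlp hp₀p hβ0 hT hR hRT (by norm_num) v x
        (by simpa using b6) (hrR x hxΩ) (by simpa using b1) (by simpa using b2)
        (by rw [← hc1, ← hc2]; exact hsB)
      rw [← hc1, ← hc2, one_mul, one_mul] at this
      refine le_trans ?_ this
      have : 0 ≤ ∑ a, dd (ee n a) v (x, T) ^ 2 := Finset.sum_nonneg fun a _ => sq_nonneg _
      positivity
    · rw [hF0 none (x, T) hx]
  have bminus : ∀ x, Real.exp (2 * s * ph x₀ β C₀ l (x, -T)) * (∑ a, dd (ee n a) Z (x, -T) ^ 2)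
      + s ^ 2 * (Real.exp (2 * s * ph x₀ β C₀ l (x, -T)) * Z (x, -T) ^ 2)
      ≤ M * (- flux x₀ β C₀ l s v none (x, -T)) := by
    intro x
    by_cases hx : x ∈ K
    · have hxΩ := hKΩ hx
      obtain ⟨b1, b2, b3, b4, b5, b6⟩ := hbd x hxΩ (-T) hTm
      have hb := boundary_pt x₀ β C₀ l s T R p₀ B (-1) hlp hp₀p hβ0 hT hR hRT (by norm_num) v x
        (by simpa using b6) (hrR x hxΩ) (by simpa using b1) (by simpa using b2)
        (by rw [← hc1, ← hc2]; exact hsB)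
      rw [← hc1, ← hc2, neg_one_mul, neg_one_mul] at hb
      set q : EuclideanSpace ℝ (Fin n) × ℝ := (x, -T)
      have hexp : Real.exp (2 * s * ph x₀ β C₀ l q) * (Real.exp (-s * ph x₀ β C₀ l q)) ^ 2 = 1 := by
        rw [← Real.exp_nat_mul, ← Real.exp_add]; simp; ring
      have i1 : Real.exp (2 * s * ph x₀ β C₀ l q) * (∑ a, dd (ee n a) Z q ^ 2)
          ≤ 2 * (∑ a, dd (ee n a) v q ^ 2) + 2 * s ^ 2 * B * v q ^ 2 := by
        calc Real.exp (2 * s * ph x₀ β C₀ l q) * (∑ a, dd (ee n a) Z q ^ 2)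
            = ∑ a, (dd (ee n a) v q - s * dd (ee n a) (ph x₀ β C₀ l) q * v q) ^ 2 := by
              rw [Finset.mul_sum]
              refine Finset.sum_congr rfl fun a _ => ?_
              rw [conj_first (ee n a) s hvs (ph_smooth x₀ β C₀ l) hZv q, mul_pow, ← mul_assoc,
                hexp, one_mul]
          _ ≤ ∑ a, (2 * dd (ee n a) v q ^ 2
                + 2 * s ^ 2 * v q ^ 2 * dd (ee n a) (ph x₀ β C₀ l) q ^ 2) := by
              refine Finset.sum_le_sum fun a _ => ?_
              linarith [sq_nonneg (dd (ee n a) v q + s * dd (ee n a) (ph x₀ β C₀ l) q * v q)]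
          _ = 2 * (∑ a, dd (ee n a) v q ^ 2)
                + 2 * s ^ 2 * v q ^ 2 * (∑ a, dd (ee n a) (ph x₀ β C₀ l) q ^ 2) := by
              rw [Finset.sum_add_distrib, ← Finset.mul_sum, ← Finset.mul_sum]
          _ ≤ 2 * (∑ a, dd (ee n a) v q ^ 2) + 2 * s ^ 2 * v q ^ 2 * B := by gcongr
          _ = _ := by ring
      have i2 : Real.exp (2 * s * ph x₀ β C₀ l q) * Z q ^ 2 = v q ^ 2 := by
        rw [hZv q, mul_pow, ← mul_assoc, hexp, one_mul]
      rw [i2]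
      set N := ∑ a, dd (ee n a) v q ^ 2
      have hN : 0 ≤ N := Finset.sum_nonneg fun a _ => sq_nonneg _
      have i3 := mul_le_mul_of_nonneg_left hb hMp.le
      refine le_trans ?_ i3
      have j1 : 2 * N ≤ M * (c1 / 2 * N) := by
        have : M * (c1 / 2 * N) = 2 * N + (2 * (1 + 2 * B) / c2) * (c1 / 2 * N) := by
          rw [hM]; field_simp; ring
        rw [this]
        have : 0 ≤ (2 * (1 + 2 * B) / c2) * (c1 / 2 * N) := by positivity
        linarith
      have j2 : (1 + 2 * B) * (s ^ 2 * v q ^ 2) ≤ M * (s ^ 2 * c2 / 2 * v q ^ 2) := by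
        have : M * (s ^ 2 * c2 / 2 * v q ^ 2)
            = (1 + 2 * B) * (s ^ 2 * v q ^ 2) + 4 / c1 * (s ^ 2 * c2 / 2 * v q ^ 2) := by
          rw [hM]; field_simp; ring
        rw [this]
        have : 0 ≤ 4 / c1 * (s ^ 2 * c2 / 2 * v q ^ 2) := by positivity
        linarith
      linarith
    · rw [hF0 none (x, -T) hx, z1 (x, -T) hx, z2 (x, -T) hx]; simp
  -- interior estimate
  have hint : ∀ x, ∀ t ∈ Set.Icc (-T) T,
      s * ∑ a, dd (ee n a) (flux x₀ β C₀ l s v a) (x, t) ≤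
      (1 / 2) * (Real.exp (2 * s * ph x₀ β C₀ l (x, t)) *
        (∑ a, eta n a * dd (ee n a) (dd (ee n a) Z) (x, t)) ^ 2) := by
    intro x t ht
    by_cases hx : x ∈ K
    · have hxΩ := hKΩ hx
      obtain ⟨b1, b2, b3, b4, b5, b6⟩ := hbd x hxΩ t ht
      have h1 := carl_interior x₀ β C₀ l s hβ1 hlp hs0 hvs hZv (x, t)
      have h2 := weight_lower (D := qD x₀ β (x, t)) hβ0 hβ1 hδ hl (hδr x hxΩ)
      have hpp := ph_pos x₀ β C₀ l (x, t)
      set p := ph x₀ β C₀ l (x, t)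
      set W := 2 * l * qD x₀ β (x, t) ^ 2 - (6 * β + 2) * qD x₀ β (x, t)
        + 16 * (1 - β) * ‖x - x₀‖ ^ 2
      set Bt := ∑ a, eta n a * dd (ee n a) (dd (ee n a) (th x₀ β C₀ l)) (x, t)
      have h3 : c3 ≤ l ^ 3 * p ^ 3 * W := by
        calc c3 = l ^ 3 * p₀ ^ 3 * (8 / l) := by rw [hc3]; field_simp
          _ ≤ l ^ 3 * p ^ 3 * W := by gcongr
      have h4 : (1 + β) ^ 2 * l ^ 2 * p ^ 2 ≤ 4 * l ^ 2 * B ^ 2 := by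
        gcongr
      have h5 : 2 * s ^ 2 * (1 + β) ^ 2 * l ^ 2 * p ^ 2 - s ^ 3 * (l ^ 3 * p ^ 3 * W)
          - s * (1 / 2) * Bt ≤ 0 := by
        have g1 : s ^ 3 * c3 ≤ s ^ 3 * (l ^ 3 * p ^ 3 * W) := by gcongr
        have g2 : s ^ 2 * ((1 + β) ^ 2 * l ^ 2 * p ^ 2) ≤ s ^ 2 * (4 * l ^ 2 * B ^ 2) := by gcongr
        have g3 : s * (-Bt) ≤ s ^ 2 * B := by
          calc s * (-Bt) ≤ s * B := by gcongr; exact (neg_le_abs Bt).trans b4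
            _ ≤ s ^ 2 * B := by gcongr
        have g4 : s ^ 2 * (8 * l ^ 2 * B ^ 2 + B / 2) ≤ s ^ 2 * (s * c3) := by gcongr
        linarith
      have h6 := mul_nonneg (neg_nonneg.2 h5) (sq_nonneg (v (x, t)))
      linarith
    · have : ∀ a, dd (ee n a) (flux x₀ β C₀ l s v a) (x, t) = 0 := fun a =>
        dd_zero hK.isClosed (ee n a) (hF0 a) (x, t) hx
      rw [z3 (x, t) hx]
      simp [this]
  -- integration
  have hdiv := int_div hK hT hFs hF0
  have cdF := fun a => (dd_smooth (ee n a) (hFs a)).continuous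
  have hdF0 : ∀ q : EuclideanSpace ℝ (Fin n) × ℝ, q.1 ∉ K →
      ∑ a, dd (ee n a) (flux x₀ β C₀ l s v a) q = 0 := fun q hq =>
    Finset.sum_eq_zero fun a _ => dd_zero hK.isClosed (ee n a) (hF0 a) q hq
  have kF : Continuous fun q => ∑ a, dd (ee n a) (flux x₀ β C₀ l s v a) q := by fun_prop
  have I1 : s * ((∫ x, flux x₀ β C₀ l s v none (x, T)) - ∫ x, flux x₀ β C₀ l s v none (x, -T))
      ≤ (1 / 2) * ∫ t in Set.Ioo (-T) T, ∫ x, Real.exp (2 * s * ph x₀ β C₀ l (x, t)) *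
        (∑ a, eta n a * dd (ee n a) (dd (ee n a) Z) (x, t)) ^ 2 := by
    rw [← hdiv, ← integral_const_mul, ← integral_const_mul]
    refine setIntegral_mono_on ?_ ?_ measurableSet_Ioo ?_
    · exact ((prod_integrable hK T kF hdF0).integral_prod_left).const_mul s
    · exact ((prod_integrable hK T k3 z3).integral_prod_left).const_mul (1 / 2)
    · intro t ht
      rw [← integral_const_mul, ← integral_const_mul]
      refine integral_mono ((slice_integrable hK kF hdF0 t).const_mul s)
        ((slice_integrable hK k3 z3 t).const_mul (1 / 2)) fun x => ?_
      exact hint x t (Set.Ioo_subset_Icc_self ht)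
  have I2 : 0 ≤ ∫ x, flux x₀ β C₀ l s v none (x, T) := integral_nonneg bplus
  have J1 := slice_integrable hK k1 z1 (-T)
  have J2 := slice_integrable hK k2 z2 (-T)
  have J3 := slice_integrable hK (hFs none).continuous (hF0 none) (-T)
  have I3 : (∫ x, Real.exp (2 * s * ph x₀ β C₀ l (x, -T)) * (∑ a, dd (ee n a) Z (x, -T) ^ 2))
      + s ^ 2 * (∫ x, Real.exp (2 * s * ph x₀ β C₀ l (x, -T)) * Z (x, -T) ^ 2)
      ≤ M * (- ∫ x, flux x₀ β C₀ l s v none (x, -T)) := by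
    rw [← integral_neg, ← integral_const_mul, ← integral_const_mul, ← integral_add J1 (J2.const_mul _)]
    exact integral_mono (J1.add (J2.const_mul _)) (J3.neg.const_mul M) bminus
  have I4 := mul_le_mul_of_nonneg_left I3 hs0.le
  have I5 := mul_le_mul_of_nonneg_left I1 hMp.le
  have I6 : 0 ≤ M * (s * ∫ x, flux x₀ β C₀ l s v none (x, T)) := by positivity
  linarith
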